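/- arXiv:math/0007136 — 3 statements merged into one kernel-verified Lean document; each statement's English description precedes it below -/
import Mathlib

section
/- (Lemma A, stronger version.) Let R be a commutative ring, let m ≥ 1, and for each j = 0, 1, ..., m-1 let p_j ∈ R[X] be a polynomial of degree at most j, with a_j denoting the coefficient of X^j in p_j. For each i = 1, ..., m let l_i ≥ 0 be an integer and let b_{1,i}, ..., b_{l_i,i} ∈ R and x_{1,i}, ..., x_{l_i,i} ∈ R be given. Then the determinant of the m×m matrix whose (i,j) entry is Σ_{k=1}^{l_i} b_{k,i} · p_{j-1}(x_{k,i}) equals (a_0 · a_1 · ... · a_{m-1}) times the determinant of the m×m matrix whose (i,j) entry is Σ_{k=1}^{l_i} b_{k,i} · x_{k,i}^{j-1}. -/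
/-- Lemma A (stronger version): if `p 0, …, p (m-1)` are polynomials with `deg (p j) ≤ j`,
and `a j` is the coefficient of `X^j` in `p j`, then for any coefficients `b k i` and points
`x k i`,
`det (∑ k, b k i · p (j-1) (x k i))_{i,j} = (a 0 ⋯ a (m-1)) · det (∑ k, b k i · x k i ^ (j-1))_{i,j}`. -/
theorem lemmaA_strong (R : Type*) [CommRing R] (m : ℕ) (hm : 1 ≤ m)
    (p : Fin m → Polynomial R) (hdeg : ∀ j, (p j).degree ≤ (j : ℕ))
    (l : Fin m → ℕ) (b : (i : Fin m) → Fin (l i) → R) (x : (i : Fin m) → Fin (l i) → R) :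
    (Matrix.of fun i j : Fin m => ∑ k : Fin (l i), b i k * (p j).eval (x i k)).det
      = (∏ j : Fin m, (p j).coeff j) *
        (Matrix.of fun i j : Fin m => ∑ k : Fin (l i), b i k * x i k ^ (j : ℕ)).det := by
  have hU : (Matrix.of fun i j : Fin m => (p j).coeff i).det = ∏ j : Fin m, (p j).coeff j := by
    rw [Matrix.det_of_upperTriangular]
    · rfl
    · intro i j hij
      have hij' : (j : ℕ) < (i : ℕ) := hij
      exact Polynomial.coeff_eq_zero_of_degree_lt
        (lt_of_le_of_lt (hdeg j) (by exact_mod_cast hij'))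
  rw [← hU, mul_comm, ← Matrix.det_mul]
  congr 1
  ext i j
  simp only [Matrix.mul_apply, Matrix.of_apply, Finset.sum_mul]
  rw [Finset.sum_comm]
  refine Finset.sum_congr rfl fun k _ => ?_
  have hn : (p j).natDegree < m :=
    lt_of_le_of_lt (Polynomial.natDegree_le_of_degree_le (hdeg j)) j.2
  rw [Polynomial.eval_eq_sum_range' hn, Finset.sum_range, Finset.mul_sum]
  exact Finset.sum_congr rfl fun t _ => by ring
end

section
/- Let n ≥ 1 and 1 ≤ m ≤ n+1 be integers, and for 0 ≤ k ≤ n let a_k be the coefficient of x^k in the polynomial (x-1)^{m-1} · (x+1)^{n-m+1}. Then: (i) for every integer j with 0 ≤ j ≤ m-2, one has Σ_{k=0}^{n} a_k · (k+1)^j = 0; and (ii) for every integer j with 0 ≤ j ≤ n-m, one has Σ_{k=0}^{n} a_k · (-1)^k · (k+1)^j = 0. -/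
open Polynomial in
theorem aux_sum (c : ℤ) (n j : ℕ) : ∀ p : Polynomial ℤ, p.natDegree ≤ n → (X - C c) ^ (j + 1) ∣ p →
    ∑ k ∈ Finset.range (n + 1), p.coeff k * c ^ k * ((k : ℤ) + 1) ^ j = 0 := by
  induction j with
  | zero =>
    intro p hp hd
    have h : p.eval c = 0 := by
      rw [zero_add, pow_one] at hd
      exact dvd_iff_isRoot.mp hd
    rw [eval_eq_sum_range' (Nat.lt_succ_of_le hp)] at h
    simpa using h
  | succ j ih =>
    intro p hp hd
    have hc : ∀ k, (derivative (X * p)).coeff k = p.coeff k * ((k : ℤ) + 1) := by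
      intro k
      rw [coeff_derivative, coeff_X_mul]
    have h := ih (derivative (X * p)) ?_ ?_
    · rw [← h]
      refine Finset.sum_congr rfl fun k _ => ?_
      rw [hc]
      ring
    · rw [natDegree_le_iff_coeff_eq_zero]
      intro k hk
      rw [hc, coeff_eq_zero_of_natDegree_lt (lt_of_le_of_lt hp hk), zero_mul]
    · exact pow_sub_one_dvd_derivative_of_pow_dvd (n := j + 1 + 1) (hd.mul_left X)

/-- Let `a k` be the coefficient of `x^k` in `(x-1)^(m-1) (x+1)^(n-m+1)`. Then
`∑_{k=0}^n a k (k+1)^j = 0` for `0 ≤ j ≤ m-2`, and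
`∑_{k=0}^n a k (-1)^k (k+1)^j = 0` for `0 ≤ j ≤ n-m`. -/
theorem coeff_orthogonality (n m : ℕ) (hn : 1 ≤ n) (hm : 1 ≤ m) (hmn : m ≤ n + 1)
    (a : ℕ → ℤ)
    (ha : ∀ k, a k =
      ((Polynomial.X - 1) ^ (m - 1) * (Polynomial.X + 1) ^ (n + 1 - m) :
        Polynomial ℤ).coeff k) :
    (∀ j : ℕ, (j : ℤ) ≤ (m : ℤ) - 2 →
        ∑ k ∈ Finset.range (n + 1), a k * ((k : ℤ) + 1) ^ j = 0) ∧
    (∀ j : ℕ, (j : ℤ) ≤ (n : ℤ) - (m : ℤ) →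
        ∑ k ∈ Finset.range (n + 1), a k * (-1) ^ k * ((k : ℤ) + 1) ^ j = 0) := by
  have hdeg : ((Polynomial.X - 1) ^ (m - 1) * (Polynomial.X + 1) ^ (n + 1 - m) :
        Polynomial ℤ).natDegree ≤ n := by
    have h1 : (Polynomial.X - 1 : Polynomial ℤ).natDegree ≤ 1 := by compute_degree
    have h2 : (Polynomial.X + 1 : Polynomial ℤ).natDegree ≤ 1 := by compute_degree
    have h3 := Polynomial.natDegree_mul_le_of_le
      (Polynomial.natDegree_pow_le_of_le (m - 1) h1)
      (Polynomial.natDegree_pow_le_of_le (n + 1 - m) h2)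
    exact h3.trans (by omega)
  constructor
  · intro j hj
    have h := aux_sum 1 n j _ hdeg (by
      rw [Polynomial.C_1]
      exact (pow_dvd_pow _ (by omega)).mul_right _)
    simpa [ha] using h
  · intro j hj
    have h := aux_sum (-1) n j _ hdeg (by
      rw [Polynomial.C_neg, Polynomial.C_1, sub_neg_eq_add]
      exact (pow_dvd_pow _ (by omega)).mul_left _)
    simpa only [ha] using h
end

section
/- (Block Laplace expansion with alternating column signs.) Let R be a commutative ring, let m_1, m_2 ≥ 0 be integers, let c be an (m_1+m_2)×m_1 matrix and d an (m_1+m_2)×m_2 matrix over R, and let b be the (m_1+m_2)×(m_1+m_2) matrix with b_{i,j} = c_{i,j} for 1 ≤ j ≤ m_1 and b_{i,j} = (-1)^{i-1} · d_{i, j-m_1} for m_1 < j ≤ m_1+m_2. Then det b = (-1)^{⌊(m_1+m_2)/2⌋ - ⌊m_1/2⌋} · Σ det(c_{x_i, j})_{i,j=1,...,m_1} · det(d_{y_i, j})_{i,j=1,...,m_2}, where the sum is over all partitions of {1, 2, ..., m_1+m_2} into two sets {x_1, ..., x_{m_1}} and {y_1, ..., y_{m_2}} with x_1 < x_2 < ...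 < x_{m_1} and y_1 < y_2 < ... < y_{m_2}. -/
open scoped Classical

lemma bla_prod_sign (a n : ℕ) :
    ∏ j : Fin n, (-1 : ℤˣ) ^ (a + (j : ℕ)) = (-1) ^ ((a + n) / 2 - a / 2) := by
  induction n with
  | zero => simp
  | succ n ih =>
    rw [Fin.prod_univ_castSucc]
    simp only [Fin.val_castSucc, Fin.val_last]
    rw [ih, ← pow_add]
    rcases Nat.even_or_odd' (a + n) with ⟨k, hk | hk⟩
    · have h1 : (a + (n + 1)) / 2 - a / 2 = (a + n) / 2 - a / 2 := by omega
      rw [h1, pow_add, hk, pow_mul]; simp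
    · have h1 : (a + (n + 1)) / 2 - a / 2 = (a + n) / 2 - a / 2 + 1 := by omega
      rw [h1, pow_add, pow_add _ _ 1, hk, pow_succ _ (2 * k), pow_mul]; simp

lemma bla_count {m₁ m₂ : ℕ} (e : Fin m₁ ⊕ Fin m₂ ≃ Fin (m₁ + m₂))
    (h2 : StrictMono fun j => e (Sum.inr j)) (j : Fin m₂) :
    (Finset.univ.filter fun i : Fin m₁ => ¬ e (Sum.inl i) < e (Sum.inr j)).card
      + (e (Sum.inr j) : ℕ) = m₁ + j := by
  have hA := Finset.card_filter_add_card_filter_not (s := (Finset.univ : Finset (Fin m₁)))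
    (fun i : Fin m₁ => e (Sum.inl i) < e (Sum.inr j))
  have hB : (Finset.univ.filter fun i : Fin m₁ => e (Sum.inl i) < e (Sum.inr j)).card
      + (Finset.univ.filter fun k : Fin m₂ => e (Sum.inr k) < e (Sum.inr j)).card
      = (e (Sum.inr j) : ℕ) := by
    rw [← Fin.card_Iio (e (Sum.inr j))]
    rw [Finset.card_filter, Finset.card_filter,
      ← Fintype.sum_sumElim (fun i : Fin m₁ => if e (Sum.inl i) < e (Sum.inr j) then 1 else 0)]
    rw [← Finset.filter_gt_eq_Iio, Finset.card_filter, ← Equiv.sum_comp e]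
    exact Finset.sum_congr rfl (by rintro (x | x) _ <;> rfl)
  have hC : (Finset.univ.filter fun k : Fin m₂ => e (Sum.inr k) < e (Sum.inr j)).card = j := by
    rw [← Fin.card_Iio j]
    congr 1
    ext k
    simpa using h2.lt_iff_lt
  simp only [Finset.card_univ, Fintype.card_fin] at hA
  omega

lemma bla_sign {m₁ m₂ : ℕ} (e : Fin m₁ ⊕ Fin m₂ ≃ Fin (m₁ + m₂))
    (h1 : StrictMono fun j => e (Sum.inl j))
    (h2 : StrictMono fun j => e (Sum.inr j)) :
    Equiv.Perm.sign (finSumFinEquiv.symm.trans e) * ∏ j, (-1 : ℤˣ) ^ (e (Sum.inr j) : ℕ)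
      = (-1) ^ ((m₁ + m₂) / 2 - m₁ / 2) := by
  have key : Equiv.Perm.sign (finSumFinEquiv.symm.trans e) =
      ∏ j : Fin m₂, (-1 : ℤˣ) ^
        (Finset.univ.filter fun i : Fin m₁ => ¬ e (Sum.inl i) < e (Sum.inr j)).card := by
    rw [Equiv.Perm.sign_eq_prod_prod_Iio]
    simp_rw [← Finset.filter_gt_eq_Iio, Finset.prod_filter]
    rw [Fin.prod_univ_add]
    simp_rw [Fin.prod_univ_add]
    simp only [Equiv.trans_apply, finSumFinEquiv_symm_apply_castAdd,
      finSumFinEquiv_symm_apply_natAdd]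
    rw [Finset.prod_eq_one, one_mul]
    · refine Finset.prod_congr rfl fun j _ => ?_
      rw [Finset.prod_eq_one (f := fun k : Fin m₂ => _), mul_one]
      · rw [← Finset.prod_const, Finset.prod_filter]
        refine Finset.prod_congr rfl fun i _ => ?_
        rw [if_pos (by simp [Fin.lt_def]; omega)]
        split_ifs <;> simp_all
      · intro k _
        split_ifs with ha hb
        · rfl
        · exact absurd (h2 (by simpa using ha)) hb
        · rfl
    · intro j _
      rw [Finset.prod_eq_one, Finset.prod_eq_one, one_mul]
      · intro k _
        rw [if_neg (by simp [Fin.lt_def]; omega)]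
      · intro k _
        split_ifs with ha hb
        · rfl
        · exact absurd (h1 (show k < j from ha)) hb
        · rfl
  rw [key, ← Finset.prod_mul_distrib, ← bla_prod_sign]
  refine Finset.prod_congr rfl fun j _ => ?_
  rw [← pow_add, bla_count e h2 j]

/-- cardinality of the complement -/
lemma bla_card {m₁ m₂ : ℕ} {s : Finset (Fin (m₁ + m₂))} (h : s.card = m₁) : sᶜ.card = m₂ := by
  rw [Finset.card_compl, h, Fintype.card_fin]; omega

/-- the permutation built from a row set and two permutations -/
def blaMap (m₁ m₂ : ℕ) (x : {s : Finset (Fin (m₁ + m₂)) // s.card = m₁} ×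
    (Equiv.Perm (Fin m₁) × Equiv.Perm (Fin m₂))) : Equiv.Perm (Fin (m₁ + m₂)) :=
  finSumFinEquiv.symm.trans ((Equiv.sumCongr x.2.1 x.2.2).trans
    (finSumEquivOfFinset x.1.2 (bla_card x.1.2)))

lemma blaMap_left {m₁ m₂ : ℕ} (x) (i : Fin m₁) : blaMap m₁ m₂ x (Fin.castAdd m₂ i) =
    x.1.1.orderEmbOfFin x.1.2 (x.2.1 i) := by
  simp [blaMap]

lemma blaMap_right {m₁ m₂ : ℕ} (x) (i : Fin m₂) : blaMap m₁ m₂ x (Fin.natAdd m₁ i) =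
    x.1.1ᶜ.orderEmbOfFin (bla_card x.1.2) (x.2.2 i) := by
  simp [blaMap]

lemma blaMap_bij (m₁ m₂ : ℕ) : Function.Bijective (blaMap m₁ m₂) := by
  rw [Fintype.bijective_iff_injective_and_card]
  constructor
  · rintro ⟨⟨s, hs⟩, p, q⟩ ⟨⟨t, ht⟩, p', q'⟩ h
    have hst : s = t := by
      have aux : ∀ x, x.1.1 = Finset.univ.image fun i => blaMap m₁ m₂ x (Fin.castAdd m₂ i) := by
        intro x
        ext a
        simp only [Finset.mem_image, Finset.mem_univ, true_and, blaMap_left]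
        constructor
        · intro ha
          rw [← Finset.mem_coe, ← Finset.range_orderEmbOfFin x.1.1 x.1.2] at ha
          obtain ⟨i, rfl⟩ := ha
          exact ⟨x.2.1.symm i, by simp⟩
        · rintro ⟨i, rfl⟩
          exact Finset.orderEmbOfFin_mem _ _ _
      have h1 := aux ⟨⟨s, hs⟩, p, q⟩
      have h2 := aux ⟨⟨t, ht⟩, p', q'⟩
      rw [h] at h1
      exact h1.trans h2.symm
    subst hst
    have hp : p = p' := by
      ext1 i
      have := congrArg (fun f => f (Fin.castAdd m₂ i)) h
      simpa [blaMap_left] using this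
    have hq : q = q' := by
      ext1 i
      have := congrArg (fun f => f (Fin.natAdd m₁ i)) h
      simpa [blaMap_right] using this
    rw [hp, hq]
  · simp only [Fintype.card_prod, Fintype.card_perm, Fintype.card_fin, Fintype.card_finset_len]
    rw [← mul_assoc]
    have := Nat.choose_mul_factorial_mul_factorial (Nat.le_add_right m₁ m₂)
    rwa [Nat.add_sub_cancel_left] at this

lemma blaMap_sign {m₁ m₂ : ℕ} (x) : Equiv.Perm.sign (blaMap m₁ m₂ x) *
      ∏ j, (-1 : ℤˣ) ^ (x.1.1ᶜ.orderEmbOfFin (bla_card x.1.2) j : ℕ) =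
    (-1) ^ ((m₁ + m₂) / 2 - m₁ / 2) * (Equiv.Perm.sign x.2.1 * Equiv.Perm.sign x.2.2) := by
  have h : blaMap m₁ m₂ x =
      (finSumFinEquiv.symm.trans (finSumEquivOfFinset x.1.2 (bla_card x.1.2))) *
      ((finSumFinEquiv.symm.trans (Equiv.Perm.sumCongr x.2.1 x.2.2)).trans finSumFinEquiv) := by
    ext i
    simp [blaMap, Equiv.Perm.mul_apply]
  have := bla_sign (finSumEquivOfFinset x.1.2 (bla_card x.1.2))
    (by intro a b hab; simpa using hab) (by intro a b hab; simpa using hab)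
  rw [h, Equiv.Perm.sign_mul, Equiv.Perm.sign_symm_trans_trans, Equiv.Perm.sign_sumCongr, ← this]
  simp only [finSumEquivOfFinset_inr]
  ac_rfl

/-- Block Laplace expansion with alternating column signs: if `b` agrees with `c` in its
first `m₁` columns and with `d`, with row `i` scaled by `(-1)^(i-1)`, in its last `m₂`
columns, then `det b` equals `(-1)^(⌊(m₁+m₂)/2⌋ - ⌊m₁/2⌋)` times the sum, over all
partitions of the rows into an increasing `m₁`-subset `s` and its complement, of
`det (c restricted to rows s) · det (d restricted to rows sᶜ)`. -/
theorem block_laplace_alternating (R : Type*) [CommRing R] (m₁ m₂ : ℕ)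
    (c : Matrix (Fin (m₁ + m₂)) (Fin m₁) R) (d : Matrix (Fin (m₁ + m₂)) (Fin m₂) R)
    (b : Matrix (Fin (m₁ + m₂)) (Fin (m₁ + m₂)) R)
    (hb : ∀ i j, b i j =
      if h : (j : ℕ) < m₁ then c i ⟨(j : ℕ), h⟩
      else (-1 : R) ^ (i : ℕ) * d i ⟨(j : ℕ) - m₁, by have := j.isLt; omega⟩) :
    b.det = (-1 : R) ^ ((m₁ + m₂) / 2 - m₁ / 2) *
      ∑ s : Finset (Fin (m₁ + m₂)),
        (if h : s.card = m₁ then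
          (Matrix.of fun i j : Fin m₁ => c (s.orderEmbOfFin h i) j).det *
          (Matrix.of fun i j : Fin m₂ =>
            d (sᶜ.orderEmbOfFin
                (by rw [Finset.card_compl, h, Fintype.card_fin]; omega) i) j).det
         else 0) := by
  have hterm : ∀ x : {s : Finset (Fin (m₁ + m₂)) // s.card = m₁} ×
      (Equiv.Perm (Fin m₁) × Equiv.Perm (Fin m₂)),
      ((Equiv.Perm.sign (blaMap m₁ m₂ x) : ℤ) : R) * ∏ i, b (blaMap m₁ m₂ x i) i =
      (-1 : R) ^ ((m₁ + m₂) / 2 - m₁ / 2) *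
        ((((Equiv.Perm.sign x.2.1 : ℤ) : R) *
          ∏ i, c (x.1.1.orderEmbOfFin x.1.2 (x.2.1 i)) i) *
        (((Equiv.Perm.sign x.2.2 : ℤ) : R) *
          ∏ i, d (x.1.1ᶜ.orderEmbOfFin (bla_card x.1.2) (x.2.2 i)) i)) := by
    intro x
    have hs := congrArg (fun u : ℤˣ => ((u : ℤ) : R)) (blaMap_sign x)
    simp only [Units.val_mul, Int.cast_mul, Units.coe_prod, Int.cast_prod, Units.val_pow_eq_pow_val,
      Int.cast_pow, Units.val_neg, Units.val_one, Int.cast_neg, Int.cast_one] at hs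
    rw [Fin.prod_univ_add]
    have e1 : ∀ i : Fin m₁, b (blaMap m₁ m₂ x (Fin.castAdd m₂ i)) (Fin.castAdd m₂ i) =
        c (x.1.1.orderEmbOfFin x.1.2 (x.2.1 i)) i := by
      intro i
      rw [hb, dif_pos (by simp), blaMap_left]
      rfl
    have e2 : ∀ i : Fin m₂, b (blaMap m₁ m₂ x (Fin.natAdd m₁ i)) (Fin.natAdd m₁ i) =
        (-1 : R) ^ (x.1.1ᶜ.orderEmbOfFin (bla_card x.1.2) (x.2.2 i) : ℕ) *
        d (x.1.1ᶜ.orderEmbOfFin (bla_card x.1.2) (x.2.2 i)) i := by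
      intro i
      rw [hb, dif_neg (by simp), blaMap_right]
      congr 2
      ext
      simp
    simp_rw [e1, e2]
    rw [Finset.prod_mul_distrib, Equiv.prod_comp x.2.2
      (fun j => (-1 : R) ^ (x.1.1ᶜ.orderEmbOfFin (bla_card x.1.2) j : ℕ))]
    linear_combination (∏ i, c (x.1.1.orderEmbOfFin x.1.2 (x.2.1 i)) i) *
      (∏ i, d (x.1.1ᶜ.orderEmbOfFin (bla_card x.1.2) (x.2.2 i)) i) * hs
  rw [Matrix.det_apply']
  rw [← (blaMap_bij m₁ m₂).sum_comp
    (fun σ => ((Equiv.Perm.sign σ : ℤ) : R) * ∏ i, b (σ i) i)]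
  simp_rw [hterm]
  rw [← Finset.mul_sum, Fintype.sum_prod_type]
  congr 1
  rw [Finset.sum_dite, Finset.sum_const_zero, add_zero]
  refine Finset.sum_bij' (fun s _ => ⟨s.1, by simp [s.2]⟩) (fun s _ => ⟨s.1, by simpa using s.2⟩)
    (by simp) (by simp) (by simp) (by simp) ?_
  intro s _
  rw [Fintype.sum_prod_type, Matrix.det_apply', Matrix.det_apply', Finset.sum_mul_sum]
  rfl
end
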